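/- Let q, a be complex numbers such that q^m ≠ 1, a q^m ≠ 1, and a^3 q^{3m} ≠ 1 for all m ≥ 1 (so that all denominators below are nonzero). Suppose (α_n, β_n) is a Bailey pair with parameters (a, q). Define α'_r = a^r q^{r^2} α_r and β'_n = (1/(a^3 q^3;q^3)_{2n}) · ∑_{k=0}^{n} [(aq;q)_{3n-k} a^k q^{k^2} / (q^3;q^3)_{n-k}] · β_k. Then (α'_n, β'_n) is a Bailey pair with parameters (a^3, q^3). -/

import Mathlib

/-- The finite q-Pochhammer symbol `(x;q)_n = ∏_{j=0}^{n-1} (1 - x q^j)`. -/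
noncomputable def qPoch (x q : ℂ) (n : ℕ) : ℂ := ∏ j ∈ Finset.range n, (1 - x * q ^ j)

/-- `(α, β)` is a Bailey pair with parameters `(a, q)`. -/
def IsBaileyPair (a q : ℂ) (α β : ℕ → ℂ) : Prop :=
  ∀ n : ℕ, β n = ∑ r ∈ Finset.range (n + 1), α r / (qPoch q q (n - r) * qPoch (a * q) q (n + r))

lemma qPoch_zero' (x q : ℂ) : qPoch x q 0 = 1 := by simp [qPoch]

lemma qPoch_succ_top (x q : ℂ) (n : ℕ) : qPoch x q (n + 1) = qPoch x q n * (1 - x * q ^ n) := by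
  simp [qPoch, Finset.prod_range_succ]

lemma qPoch_succ_bot (x q : ℂ) (n : ℕ) : qPoch x q (n + 1) = (1 - x) * qPoch (x * q) q n := by
  simp only [qPoch, Finset.prod_range_succ']
  rw [mul_comm]
  congr 1
  · simp
  · refine Finset.prod_congr rfl fun j _ => ?_
    ring

lemma qPoch_add (x q : ℂ) (m n : ℕ) :
    qPoch x q (m + n) = qPoch x q m * qPoch (x * q ^ m) q n := by
  simp only [qPoch, Finset.prod_range_add]
  congr 1
  refine Finset.prod_congr rfl fun j _ => ?_
  ring

lemma qPoch_ne_zero (x q : ℂ) (h : ∀ m : ℕ, x * q ^ m ≠ 1) (n : ℕ) : qPoch x q n ≠ 0 := by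
  refine Finset.prod_ne_zero_iff.2 fun j _ => ?_
  exact sub_ne_zero.2 (h j).symm

/-- summand of the key identity -/
noncomputable def keyF (A q : ℂ) (N j : ℕ) : ℂ :=
  qPoch (A * q ^ (j + 1)) q (3 * N - 2 * j) * A ^ j * q ^ (j ^ 2) /
    (qPoch (q ^ 3) (q ^ 3) (N - j) * qPoch q q j)

/-- telescoping certificate -/
noncomputable def keyG (A q : ℂ) (N j : ℕ) : ℂ :=
  -((1 - q ^ j) * qPoch (A * q ^ (j + 2)) q (3 * N - 2 * j - 1) *
    ((1 - A * q) * q ^ j + (1 - A * q ^ (3 * N + 1)) + q ^ (3 * N - j) * (1 - A * q)) *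
    A ^ j * q ^ (j ^ 2) / (qPoch (q ^ 3) (q ^ 3) (N - j) * qPoch q q j))

lemma qq_ne (q : ℂ) (hq1 : ∀ m : ℕ, 1 ≤ m → q ^ m ≠ 1) (n : ℕ) : qPoch q q n ≠ 0 := by
  refine qPoch_ne_zero _ _ (fun m => ?_) n
  rw [← pow_succ']
  exact hq1 _ (by omega)

lemma qq3_ne (q : ℂ) (hq1 : ∀ m : ℕ, 1 ≤ m → q ^ m ≠ 1) (n : ℕ) :
    qPoch (q ^ 3) (q ^ 3) n ≠ 0 := by
  refine qPoch_ne_zero _ _ (fun m => ?_) n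
  rw [← pow_succ', ← pow_mul]
  exact hq1 _ (by omega)

lemma key_step (A q : ℂ) (hq1 : ∀ m : ℕ, 1 ≤ m → q ^ m ≠ 1) (i j : ℕ) :
    (1 - q ^ (3 * (i + j + 1))) * keyF A q (i + j + 1) j
      - (1 - A ^ 3 * q ^ (3 * (i + j + 1) + 3)) * keyF (A * q ^ 2) q (i + j) j
      = keyG A q (i + j + 1) (j + 1) - keyG A q (i + j + 1) j := by
  unfold keyF keyG
  have e1 : 3 * (i + j + 1) - 2 * j = (3 * i + j + 1) + 1 + 1 := by omega
  have e2 : i + j + 1 - j = i + 1 := by omega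
  have e3 : 3 * (i + j) - 2 * j = 3 * i + j := by omega
  have e4 : i + j - j = i := by omega
  have e5 : 3 * (i + j + 1) - 2 * (j + 1) - 1 = 3 * i + j := by omega
  have e6 : i + j + 1 - (j + 1) = i := by omega
  have e7 : 3 * (i + j + 1) - (j + 1) = 3 * i + 2 * j + 2 := by omega
  have e8 : (3 * i + j + 1) + 1 - 1 = 3 * i + j + 1 := by omega
  have e9 : 3 * (i + j + 1) - j = 3 * i + 2 * j + 3 := by omega
  have e10 : (3 * i + j + 1) + 1 + 1 - 1 = (3 * i + j + 1) + 1 := by omega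
  rw [e5, e1, e10, e2, e3, e4, e6, e7, e9]
  have p1 : qPoch (A * q ^ (j + 2)) q (3 * i + j + 1 + 1) =
      (1 - A * q ^ (j + 2)) * (qPoch (A * q ^ (j + 3)) q (3 * i + j)
        * (1 - A * q ^ (3 * i + 2 * j + 3))) := by
    rw [qPoch_succ_bot, show A * q ^ (j + 2) * q = A * q ^ (j + 3) by ring, qPoch_succ_top]
    ring
  have p2 : qPoch (A * q ^ (j + 1)) q (3 * i + j + 1 + 1 + 1) =
      (1 - A * q ^ (j + 1)) * ((1 - A * q ^ (j + 2)) * (qPoch (A * q ^ (j + 3)) q (3 * i + j)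
        * (1 - A * q ^ (3 * i + 2 * j + 3)))) := by
    rw [qPoch_succ_bot, show A * q ^ (j + 1) * q = A * q ^ (j + 2) by ring, p1]
  have p3 : A * q ^ 2 * q ^ (j + 1) = A * q ^ (j + 3) := by ring
  have p4 : A * q ^ (j + 1 + 2) = A * q ^ (j + 3) := by ring
  rw [p1, p2, p3, p4, qPoch_succ_top q q j, qPoch_succ_top (q ^ 3) (q ^ 3) i]
  have n1 := qq_ne q hq1 j
  have n2 := qq3_ne q hq1 i
  have n3 : 1 - q * q ^ j ≠ 0 := by
    rw [← pow_succ']; exact sub_ne_zero.2 (hq1 _ (by omega)).symm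
  have n4 : 1 - q ^ 3 * (q ^ 3) ^ i ≠ 0 := by
    rw [← pow_succ', ← pow_mul]; exact sub_ne_zero.2 (hq1 _ (by omega)).symm
  generalize qPoch q q j = Q1 at *
  generalize qPoch (q ^ 3) (q ^ 3) i = Q2 at *
  generalize qPoch (A * q ^ (j + 3)) q (3 * i + j) = P at *
  have s1 : q ^ ((j + 1) ^ 2) = q ^ (j ^ 2) * q ^ j * q ^ j * q := by ring
  have s2 : (q ^ 3) ^ i = (q ^ i) ^ 3 := by ring
  have s3 : q ^ (3 * (i + j + 1)) = (q ^ i) ^ 3 * (q ^ j) ^ 3 * q ^ 3 := by ring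
  have s4 : q ^ (3 * (i + j + 1) + 3) = (q ^ i) ^ 3 * (q ^ j) ^ 3 * q ^ 6 := by ring
  have s5 : q ^ (3 * (i + j + 1) + 1) = (q ^ i) ^ 3 * (q ^ j) ^ 3 * q ^ 4 := by ring
  have s6 : q ^ (3 * i + 2 * j + 3) = (q ^ i) ^ 3 * (q ^ j) ^ 2 * q ^ 3 := by ring
  have s7 : q ^ (3 * i + 2 * j + 2) = (q ^ i) ^ 3 * (q ^ j) ^ 2 * q ^ 2 := by ring
  have s8 : (A * q ^ 2) ^ j = A ^ j * (q ^ j) ^ 2 := by ring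
  rw [s1, s3, s4, s5, s6, s7, s8]
  rw [s2] at n4 ⊢
  simp only [pow_succ q j, pow_add q j, pow_succ A j]
  generalize q ^ (j ^ 2) = qj2 at *
  generalize q ^ j = x at *
  generalize q ^ i = w at *
  generalize A ^ j = Aj at *
  rw [mul_comm] at n3
  rw [mul_comm q x]
  obtain ⟨D, hD⟩ : ∃ D, D = 1 - q ^ 3 * w ^ 3 := ⟨_, rfl⟩
  obtain ⟨E, hE⟩ : ∃ E, E = 1 - x * q := ⟨_, rfl⟩
  rw [← hD] at n4 ⊢
  rw [← hE] at n3 ⊢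
  field_simp
  rw [hD]
  ring

lemma key_partial (A q : ℂ) (hq1 : ∀ m : ℕ, 1 ≤ m → q ^ m ≠ 1) (N : ℕ) (m : ℕ) (hm : m ≤ N + 1) :
    ∑ j ∈ Finset.range m, ((1 - q ^ (3 * (N + 1))) * keyF A q (N + 1) j
      - (1 - A ^ 3 * q ^ (3 * (N + 1) + 3)) * keyF (A * q ^ 2) q N j)
      = keyG A q (N + 1) m := by
  induction m with
  | zero => simp [keyG]
  | succ m ih =>
    rw [Finset.sum_range_succ, ih (by omega)]
    obtain ⟨i, rfl⟩ : ∃ i, N = i + m := ⟨N - m, by omega⟩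
    rw [key_step A q hq1]
    ring

lemma key_last (A q : ℂ) (N : ℕ) :
    (1 - q ^ (3 * (N + 1))) * keyF A q (N + 1) (N + 1) + keyG A q (N + 1) (N + 1) = 0 := by
  unfold keyF keyG
  have e1 : 3 * (N + 1) - 2 * (N + 1) = N + 1 := by omega
  have e2 : 3 * (N + 1) - (N + 1) = 2 * (N + 1) := by omega
  rw [e1, e2, qPoch_succ_bot, Nat.add_sub_cancel,
    show A * q ^ (N + 1 + 1) * q = A * q ^ (N + 1 + 2) by ring]
  generalize qPoch (A * q ^ (N + 1 + 2)) q N = P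
  rw [div_eq_mul_inv, div_eq_mul_inv]
  generalize (qPoch (q ^ 3) (q ^ 3) (N + 1 - (N + 1)) * qPoch q q (N + 1))⁻¹ = R
  ring

lemma key_sum (q : ℂ) (hq1 : ∀ m : ℕ, 1 ≤ m → q ^ m ≠ 1) (N : ℕ) : ∀ A : ℂ,
    ∑ j ∈ Finset.range (N + 1), keyF A q N j =
      qPoch (A ^ 3 * q ^ (3 * N + 3)) (q ^ 3) N / qPoch (q ^ 3) (q ^ 3) N := by
  induction N with
  | zero => intro A; simp [keyF, qPoch]
  | succ N ih =>
    intro A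
    have h := key_partial A q hq1 N (N + 1) le_rfl
    rw [Finset.sum_sub_distrib, ← Finset.mul_sum, ← Finset.mul_sum, ih] at h
    have h2 := key_last A q N
    have n1 := qq3_ne q hq1 N
    have n2 : 1 - q ^ (3 * (N + 1)) ≠ 0 := sub_ne_zero.2 (hq1 _ (by omega)).symm
    rw [Finset.sum_range_succ, qPoch_succ_bot, qPoch_succ_top (q ^ 3) (q ^ 3) N,
      show q ^ 3 * (q ^ 3) ^ N = q ^ (3 * (N + 1)) by ring]
    rw [show (A * q ^ 2) ^ 3 * q ^ (3 * N + 3) = A ^ 3 * q ^ (3 * (N + 1) + 3) * q ^ 3 by ring] at h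
    rw [eq_div_iff (mul_ne_zero n1 n2)]
    field_simp at h
    linear_combination h + qPoch (q ^ 3) (q ^ 3) N * h2

/-- Theorem 2.3: base change from `(a, q)` to `(a³, q³)`. -/
theorem bailey_base_change_thm23 (q a : ℂ)
    (hq1 : ∀ m : ℕ, 1 ≤ m → q ^ m ≠ 1)
    (ha1 : ∀ m : ℕ, 1 ≤ m → a * q ^ m ≠ 1)
    (ha3 : ∀ m : ℕ, 1 ≤ m → a ^ 3 * q ^ (3 * m) ≠ 1)
    (α β : ℕ → ℂ)
    (hpair : IsBaileyPair a q α β) :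
    IsBaileyPair (a ^ 3) (q ^ 3)
      (fun r => a ^ r * q ^ (r ^ 2) * α r)
      (fun n => (1 / qPoch (a ^ 3 * q ^ 3) (q ^ 3) (2 * n)) *
        ∑ k ∈ Finset.range (n + 1),
          qPoch (a * q) q (3 * n - k) * a ^ k * q ^ (k ^ 2) / qPoch (q ^ 3) (q ^ 3) (n - k) *
            β k) := by
  intro n
  have n1 := qq_ne q hq1
  have n2 := qq3_ne q hq1
  have n3 : ∀ n, qPoch (a * q) q n ≠ 0 := qPoch_ne_zero _ _ fun m => by
    rw [mul_assoc, ← pow_succ']; exact ha1 _ (by omega)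
  have n4 : ∀ n, qPoch (a ^ 3 * q ^ 3) (q ^ 3) n ≠ 0 := qPoch_ne_zero _ _ fun m => by
    rw [mul_assoc, ← pow_succ', ← pow_mul]; exact ha3 _ (by omega)
  simp only []
  simp only [hpair _, Finset.mul_sum]
  simp only [Finset.range_eq_Ico]
  rw [← Finset.sum_Ico_Ico_comm]
  refine Finset.sum_congr rfl fun r hr => ?_
  have hr' : r ≤ n := by have := (Finset.mem_Ico.1 hr).2; omega
  obtain ⟨N, rfl⟩ : ∃ N, n = r + N := ⟨n - r, by omega⟩
  rw [Finset.sum_Ico_eq_sum_range, show r + N + 1 - r = N + 1 by omega]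
  have key := key_sum q hq1 N (a * q ^ (2 * r))
  have term : ∀ j ∈ Finset.range (N + 1),
      1 / qPoch (a ^ 3 * q ^ 3) (q ^ 3) (2 * (r + N)) *
        (qPoch (a * q) q (3 * (r + N) - (r + j)) * a ^ (r + j) * q ^ ((r + j) ^ 2) /
          qPoch (q ^ 3) (q ^ 3) (r + N - (r + j)) *
          (α r / (qPoch q q (r + j - r) * qPoch (a * q) q (r + j + r)))) =
      (α r * a ^ r * q ^ (r ^ 2) / qPoch (a ^ 3 * q ^ 3) (q ^ 3) (2 * (r + N))) *
        keyF (a * q ^ (2 * r)) q N j := by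
    intro j hj
    have hj' : j ≤ N := by have := Finset.mem_range.1 hj; omega
    unfold keyF
    have e1 : 3 * (r + N) - (r + j) = (r + j + r) + (3 * N - 2 * j) := by omega
    have e2 : r + N - (r + j) = N - j := by omega
    have e3 : r + j - r = j := by omega
    rw [e1, e2, e3, qPoch_add,
      show a * q * q ^ (r + j + r) = a * q ^ (2 * r) * q ^ (j + 1) by ring]
    have := n3 (r + j + r)
    have := n2 (N - j)
    have := n1 j
    have := n4 (2 * (r + N))
    have s : q ^ ((r + j) ^ 2) = q ^ (r ^ 2) * q ^ (j ^ 2) * q ^ (2 * r * j) := by ring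
    have s' : (a * q ^ (2 * r)) ^ j = a ^ j * q ^ (2 * r * j) := by ring
    rw [s, s', pow_add a]
    field_simp
  rw [Finset.sum_congr rfl term, ← Finset.mul_sum, key, show r + N - r = N by omega,
    show 2 * (r + N) = (r + N + r) + N by ring, qPoch_add _ _ (r + N + r) N,
    show a ^ 3 * q ^ 3 * (q ^ 3) ^ (r + N + r) = (a * q ^ (2 * r)) ^ 3 * q ^ (3 * N + 3) by ring]
  have m1 := n4 ((r + N + r) + N)
  rw [qPoch_add,
    show a ^ 3 * q ^ 3 * (q ^ 3) ^ (r + N + r) = (a * q ^ (2 * r)) ^ 3 * q ^ (3 * N + 3) by ring]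
    at m1
  have m2 := right_ne_zero_of_mul m1
  have m3 := n4 (r + N + r)
  have m4 := n2 N
  clear m1 term key
  generalize qPoch ((a * q ^ (2 * r)) ^ 3 * q ^ (3 * N + 3)) (q ^ 3) N = Z at *
  field_simp
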